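/- Let D be a finite digraph whose vertex set is partitioned into sets {v₁,…,v_{n'}} and {u₁,…,u_p}, and let r' and r be nonnegative integers such that: every vertex u_i has out-degree exactly r, all out-neighbors of each u_i lying in {v₁,…,v_{n'}}; every vertex v_j has exactly r' + 1 in-neighbors among {u₁,…,u_p}; every vertex v_j has in-degree exactly r' in the subdigraph induced by {v₁,…,v_{n'}}; every vertex u_i has in-degree at least 2r' + 1 in D; p·r = (r'+1)·n'; and the maximum out-degree of D equals r. Then {u₁,…,u_p} is a global offensive 1-alliance in D, δ⁻(D) = 2r' + 1, Δ⁺(D) = r, and γ₁ᵒ(D) ≤ p = (1 + δ⁻(D))·(n' + p)/(2Δ⁺(D) + δ⁻(D) + 1). -/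

import Mathlib

open Finset

variable {V : Type*}

/-- In-degree of `v` from the set `T` in the digraph with arc relation `A`. -/
def inDegOn [Fintype V] (A : V → V → Prop) [DecidableRel A] (T : Finset V) (v : V) : ℕ :=
  (T.filter fun u => A u v).card

/-- Out-degree of `v` to the set `T` in the digraph with arc relation `A`. -/
def outDegOn [Fintype V] (A : V → V → Prop) [DecidableRel A] (T : Finset V) (v : V) : ℕ :=
  (T.filter fun w => A v w).card

/-- `S` is a global offensive `k`-alliance in the digraph with arc relation `A`. -/
def GOkA [Fintype V] [DecidableEq V] (A : V → V → Prop) [DecidableRel A] (k : ℤ)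
    (S : Finset V) : Prop :=
  ∀ v ∉ S, (∃ u ∈ S, A u v) ∧ ((inDegOn A Sᶜ v : ℤ) + k ≤ (inDegOn A S v : ℤ))

/-- The global offensive `k`-alliance number of a digraph. -/
noncomputable def goNum [Fintype V] [DecidableEq V] (A : V → V → Prop) [DecidableRel A]
    (k : ℤ) : ℕ :=
  sInf {m | ∃ S : Finset V, GOkA A k S ∧ S.card = m}

/-- Maximum out-degree `Δ⁺`. -/
def maxOutDeg [Fintype V] (A : V → V → Prop) [DecidableRel A] : ℕ :=
  univ.sup fun v => outDegOn A univ v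

/-- Maximum in-degree `Δ⁻`. -/
def maxInDeg [Fintype V] (A : V → V → Prop) [DecidableRel A] : ℕ :=
  univ.sup fun v => inDegOn A univ v

/-- Minimum in-degree `δ⁻`. -/
def minInDeg [Fintype V] [Nonempty V] (A : V → V → Prop) [DecidableRel A] : ℕ :=
  univ.inf' univ_nonempty fun v => inDegOn A univ v

/-!
Each vertex outside `U` has `s` in-neighbors in `U` and `r'` outside it. The difference `k = s - r'`
makes `U` a global offensive `k`-alliance, and the sum `r' + s` is the minimum in-degree `δ⁻`, since
no vertex of `U` has a smaller one. Hence `2 * s = k + δ⁻`, and eliminating `s` from the arc count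
`|U| * Δ⁺ = s * |Uᶜ|` expresses `|U|` through `k`, `δ⁻`, `Δ⁺` and the order of the digraph.
-/

section DegreeLemmas

variable [Fintype V] {A : V → V → Prop} [DecidableRel A]

theorem inDegOn_pos_iff {S : Finset V} {v : V} : 0 < inDegOn A S v ↔ ∃ u ∈ S, A u v :=
  card_pos.trans filter_nonempty_iff

theorem inDegOn_add_inDegOn_compl [DecidableEq V] (S : Finset V) (v : V) :
    inDegOn A S v + inDegOn A Sᶜ v = inDegOn A univ v := by
  unfold inDegOn
  rw [← card_union_of_disjoint (disjoint_filter_filter disjoint_compl_right), ← filter_union,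
    union_compl]

theorem minInDeg_eq_of_forall_le [Nonempty V] {d : ℕ} {v : V}
    (hle : ∀ w, d ≤ inDegOn A univ w) (hv : inDegOn A univ v = d) : minInDeg A = d :=
  le_antisymm (hv ▸ inf'_le _ (mem_univ v)) (le_inf' _ _ fun w _ => hle w)

theorem GOkA.goNum_le_card [DecidableEq V] {k : ℤ} {S : Finset V} (hS : GOkA A k S) :
    goNum A k ≤ S.card :=
  Nat.sInf_le ⟨S, hS, rfl⟩

theorem gOkA_of_le_inDegOn [DecidableEq V] {k : ℤ} {S : Finset V} {r' s : ℕ}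
    (hs : 0 < s) (hk : r' + k ≤ s) (hin : ∀ v ∉ S, s ≤ inDegOn A S v)
    (hcompl : ∀ v ∉ S, inDegOn A Sᶜ v ≤ r') : GOkA A k S := by
  intro v hv
  have hs_le : s ≤ inDegOn A S v := hin v hv
  have hle_r' : inDegOn A Sᶜ v ≤ r' := hcompl v hv
  exact ⟨inDegOn_pos_iff.mp (hs.trans_le hs_le), by lia⟩

theorem minInDeg_eq_add_of_inDegOn_eq [DecidableEq V] [Nonempty V] {S : Finset V} {r' s : ℕ}
    (hne : Sᶜ.Nonempty) (hin : ∀ v ∉ S, inDegOn A S v = s)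
    (hcompl : ∀ v ∉ S, inDegOn A Sᶜ v = r') (hle : ∀ u ∈ S, r' + s ≤ inDegOn A univ u) :
    minInDeg A = r' + s := by
  have hdeg : ∀ v ∉ S, inDegOn A univ v = r' + s := fun v hv => by
    rw [← inDegOn_add_inDegOn_compl S, hin v hv, hcompl v hv, add_comm]
  obtain ⟨v, hv⟩ := hne
  refine minInDeg_eq_of_forall_le (fun w => ?_) (hdeg v (mem_compl.mp hv))
  by_cases hw : w ∈ S
  · exact hle w hw
  · exact (hdeg w hw).ge

end DegreeLemmas

theorem eq_alliance_ratio_of_mul_eq_mul {K : Type*} [Field K] [NeZero (2 : K)]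
    {p n r s k δ : K} (hrs : r + s ≠ 0) (hkδ : k + δ = 2 * s) (hcount : p * r = s * n) :
    p = (k + δ) * (n + p) / (2 * r + δ + k) := by
  have hden : 2 * r + δ + k = 2 * (r + s) := by linear_combination hkδ
  rw [hden, hkδ, eq_div_iff (mul_ne_zero two_ne_zero hrs)]
  linear_combination 2 * hcount

theorem phi_family_attains_bound_general [Fintype V] [DecidableEq V] [Nonempty V]
    (A : V → V → Prop) [DecidableRel A] (U : Finset V) (r' s : ℕ) (k : ℤ)
    (hs : 0 < s) (hk : (s : ℤ) = r' + k) (hne : Uᶜ.Nonempty)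
    (hin : ∀ v ∉ U, inDegOn A U v = s) (hcompl : ∀ v ∉ U, inDegOn A Uᶜ v = r')
    (hUin : ∀ u ∈ U, r' + s ≤ inDegOn A univ u)
    (hcount : U.card * maxOutDeg A = s * Uᶜ.card) :
    GOkA A k U ∧ minInDeg A = r' + s ∧ goNum A k ≤ U.card ∧
    (U.card : ℚ) = (k + minInDeg A) * (Uᶜ.card + U.card) /
      (2 * maxOutDeg A + minInDeg A + k) := by
  have hU : GOkA A k U :=
    gOkA_of_le_inDegOn hs hk.ge (fun v hv => (hin v hv).ge) fun v hv => (hcompl v hv).le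
  have hmin : minInDeg A = r' + s := minInDeg_eq_add_of_inDegOn_eq hne hin hcompl hUin
  have hkδ : (k : ℚ) + minInDeg A = 2 * s := by
    have hk' : (s : ℚ) = r' + k := mod_cast hk
    rw [hmin, Nat.cast_add]
    linear_combination -hk'
  exact ⟨hU, hmin, hU.goNum_le_card,
    eq_alliance_ratio_of_mul_eq_mul (by positivity) hkδ (mod_cast hcount)⟩

/-- The family `Φ`: if the vertex set of `D` is partitioned into `Vs = {v₁,…,v_{n'}}` and
`U = {u₁,…,u_p}` with: every `uᵢ` of out-degree exactly `r`, all its out-neighbors in `Vs`;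
every `vⱼ` with exactly `r' + 1` in-neighbors in `U`; every `vⱼ` of in-degree exactly `r'` in
the subdigraph induced by `Vs`; every `uᵢ` of in-degree at least `2r' + 1`; `p·r = (r'+1)·n'`;
and `Δ⁺(D) = r`; then `U` is a global offensive 1-alliance, `δ⁻(D) = 2r' + 1`, `Δ⁺(D) = r`,
and `γ₁ᵒ(D) ≤ p = (1 + δ⁻)(n' + p)/(2Δ⁺ + δ⁻ + 1)`. -/
theorem phi_family_attains_bound [Fintype V] [DecidableEq V] [Nonempty V]
    (A : V → V → Prop) [DecidableRel A] (hloopless : ∀ v, ¬ A v v)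
    (Vs U : Finset V) (r' r : ℕ)
    (hVs : Vs.Nonempty) (hU : U.Nonempty)
    (hcover : Vs ∪ U = univ) (hdisj : Disjoint Vs U)
    (hUout : ∀ u ∈ U, outDegOn A univ u = r ∧ ∀ w, A u w → w ∈ Vs)
    (hVinU : ∀ v ∈ Vs, inDegOn A U v = r' + 1)
    (hVinV : ∀ v ∈ Vs, inDegOn A Vs v = r')
    (hUin : ∀ u ∈ U, 2 * r' + 1 ≤ inDegOn A univ u)
    (hcount : U.card * r = (r' + 1) * Vs.card)
    (hmax : maxOutDeg A = r) :
    GOkA A 1 U ∧ minInDeg A = 2 * r' + 1 ∧ maxOutDeg A = r ∧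
    goNum A 1 ≤ U.card ∧
    (U.card : ℚ) = (1 + (minInDeg A : ℚ)) * ((Vs.card : ℚ) + (U.card : ℚ)) /
      (2 * (maxOutDeg A : ℚ) + (minInDeg A : ℚ) + 1) := by
  obtain rfl : Vs = Uᶜ := (IsCompl.of_eq hdisj.eq_bot hcover).eq_compl
  subst hmax
  simp only [mem_compl] at hVinU hVinV
  simp only [two_mul, add_assoc] at hUin
  simpa only [two_mul, add_assoc, Int.cast_one, true_and] using
    phi_family_attains_bound_general A U r' (r' + 1) 1 r'.succ_pos r'.cast_succ hVs hVinU hVinV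
      hUin hcount
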